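/- Let p(·) ∈ B(ℝⁿ). Then there exist a constant C > 0 and an exponent δ₁ ∈ (0,1) such that for all balls B in ℝⁿ and all measurable subsets S ⊂ B: ‖χ_B‖_{L^{p(·)}(ℝⁿ)} / ‖χ_S‖_{L^{p(·)}(ℝⁿ)} ≤ C |B|/|S| and ‖χ_S‖_{L^{p(·)}(ℝⁿ)} / ‖χ_B‖_{L^{p(·)}(ℝⁿ)} ≤ C (|S|/|B|)^{δ₁}. -/

import Mathlib

/-!
Write `N(S)` for the norm of the characteristic function `χ_S`.

For the first inequality, the maximal function of `χ_S` is at least `|S| / |B|` on `B`, so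
boundedness of the maximal operator gives `(|S| / |B|) N(B) ≤ C N(S)`.

The second inequality is proved by iterating a stopping-time construction, without duality. If
`S ⊆ B` fills at most half of `B`, take the union `S₁` of all balls inside `B` in which `S` has
density between `2^{-(n+1)}` and `1/2`. By Lebesgue density `S₁` covers almost all of `S`, and by the
Vitali covering lemma `|S₁| ≤ K |S|` with `K = 5^n 2^{n+1}` (`exists_expansion`). The maximal function
of `S₁ \ S` is at least `1/2` on `S₁`, hence `N(S₁) ≤ 2C N(S₁ \ S)`. As the exponent is essentially
bounded, `S₁ \ S` therefore takes a fixed share of the modular of `S₁`, and `N(S) ≤ θ N(S₁)` for some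
`θ < 1` depending only on the exponent (`luxNorm_contract`). About `log_K (|B| / |S|)` steps are
possible before the volume of `B` is exhausted, which gives `N(S) ≤ θ^k N(B)` with that number `k` of
steps (`luxNorm_iterate`), and this is a power of `|S| / |B|`.

The boundedness hypothesis only has content when the maximal function lies in the space, since an
infimum over the empty set is `0`. It is applied only to characteristic functions of bounded sets,
whose maximal functions decay like `|x|^{-n}` and so have finite norm because the exponent is
essentially bounded below by some `q > 1` (`exists_maxOp_admissible`).
-/

open MeasureTheory Metric Set Filter ENNReal

noncomputable section

abbrev Vn (n : ℕ) := EuclideanSpace ℝ (Fin n)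

/-- The Luxemburg norm `‖f‖_{L^{p(·)}(E)}` with variable exponent `p` on the set `E`. -/
def luxNorm {n : ℕ} (E : Set (Vn n)) (p f : Vn n → ℝ) : ℝ :=
  sInf {η : ℝ | 0 < η ∧ ∫⁻ x in E, ENNReal.ofReal ((|f x| / η) ^ (p x)) ∂volume ≤ 1}

/-- Membership in the variable Lebesgue space `L^{p(·)}(E)`. -/
def MemLux {n : ℕ} (E : Set (Vn n)) (p f : Vn n → ℝ) : Prop :=
  Measurable f ∧ ∃ η : ℝ, 0 < η ∧
    ∫⁻ x in E, ENNReal.ofReal ((|f x| / η) ^ (p x)) ∂volume ≤ 1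

/-- The class `𝒫(E)`: measurable exponents with values in `[1,∞)`,
`ess inf p > 1` and `ess sup p < ∞`. -/
def IsPExp {n : ℕ} (E : Set (Vn n)) (p : Vn n → ℝ) : Prop :=
  Measurable p ∧ (∀ x ∈ E, 1 ≤ p x) ∧
    1 < essInf p (volume.restrict E) ∧
    IsBoundedUnder (· ≤ ·) (ae (volume.restrict E)) p

/-- The pointwise conjugate exponent `p'(x) = p(x)/(p(x)-1)`. -/
def conjExp {n : ℕ} (p : Vn n → ℝ) : Vn n → ℝ := fun x => p x / (p x - 1)

/-- The Hardy–Littlewood maximal operator relative to the set `E`. -/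
def maxOp {n : ℕ} (E : Set (Vn n)) (f : Vn n → ℝ) (x : Vn n) : ℝ :=
  ⨆ B : {B : Set (Vn n) // (∃ c r, 0 < r ∧ B = Metric.ball c r) ∧ x ∈ B},
    (volume B.1).toReal⁻¹ * ∫ y in B.1 ∩ E, |f y|

/-- The class `ℬ(ℝⁿ)`: exponents in `𝒫(ℝⁿ)` for which `M` is bounded on `L^{p(·)}(ℝⁿ)`. -/
def IsBExp {n : ℕ} (p : Vn n → ℝ) : Prop :=
  IsPExp Set.univ p ∧ ∃ C : ℝ, 0 < C ∧ ∀ f : Vn n → ℝ, MemLux Set.univ p f →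
    luxNorm Set.univ p (maxOp Set.univ f) ≤ C * luxNorm Set.univ p f

/-- The characteristic function of a set. -/
def chiS {n : ℕ} (S : Set (Vn n)) : Vn n → ℝ := S.indicator fun _ => 1

/-- The property of `δ₂` from Lemma 2.3 (for the conjugate exponent `q'`):
`‖χ_S‖_{q'} / ‖χ_B‖_{q'} ≤ C (|S|/|B|)^{δ₂}` for all balls `B` and measurable `S ⊆ B`. -/
def Delta2Prop {n : ℕ} (q : Vn n → ℝ) (δ₂ : ℝ) : Prop :=
  ∃ C : ℝ, 0 < C ∧ ∀ (c : Vn n) (r : ℝ), 0 < r → ∀ S ⊆ Metric.ball c r, MeasurableSet S →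
    luxNorm Set.univ (conjExp q) (chiS S) ≤
      C * ((volume S).toReal / (volume (Metric.ball c r)).toReal) ^ δ₂ *
        luxNorm Set.univ (conjExp q) (chiS (Metric.ball c r))

/-- `B_k = {x : |x| ≤ 2^k}`. -/
def Bk (n : ℕ) (k : ℤ) : Set (Vn n) := Metric.closedBall 0 ((2 : ℝ) ^ k)

/-- `A_k = B_k \ B_{k-1}`. -/
def Ak (n : ℕ) (k : ℤ) : Set (Vn n) := Bk n k \ Bk n (k - 1)

/-- The homogeneous Herz norm `‖f‖_{K̇^{α,p}_{q(·)}}`, valued in `ℝ≥0∞`. -/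
def herzNorm {n : ℕ} (α p : ℝ) (q f : Vn n → ℝ) : ℝ≥0∞ :=
  (∑' k : ℤ, (ENNReal.ofReal ((2 : ℝ) ^ ((k : ℝ) * α)) *
      ENNReal.ofReal (luxNorm Set.univ q fun x => f x * chiS (Ak n k) x)) ^ p) ^ (1 / p)

/-- The homogeneous weak Herz norm `‖f‖_{WK̇^{α,p}_{q(·)}}`, valued in `ℝ≥0∞`. -/
def weakHerzNorm {n : ℕ} (α p : ℝ) (q f : Vn n → ℝ) : ℝ≥0∞ :=
  ⨆ lam : {l : ℝ // 0 < l},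
    ENNReal.ofReal lam.1 *
      (∑' k : ℤ, (ENNReal.ofReal ((2 : ℝ) ^ ((k : ℝ) * α)) *
          ENNReal.ofReal (luxNorm Set.univ q (chiS {x ∈ Ak n k | lam.1 < |f x|}))) ^ p) ^ (1 / p)

/-- The weak variable Lebesgue norm `‖f‖_{WL^{q(·)}}`. -/
def weakLuxNorm {n : ℕ} (q f : Vn n → ℝ) : ℝ :=
  ⨆ lam : {l : ℝ // 0 < l}, lam.1 * luxNorm Set.univ q (chiS {x | lam.1 < |f x|})

/-- `χ̃_k` : for `k ≥ 1` the indicator of `A_k`, for `k = 0` the indicator of `B_0`. -/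
def chiTilde (n : ℕ) (k : ℕ) : Vn n → ℝ :=
  if k = 0 then chiS (Bk n 0) else chiS (Ak n (k : ℤ))

/-- The non-homogeneous Herz norm `‖f‖_{K^{α,p}_{q(·)}}`. -/
def herzNormNH {n : ℕ} (α p : ℝ) (q f : Vn n → ℝ) : ℝ≥0∞ :=
  (∑' k : ℕ, (ENNReal.ofReal ((2 : ℝ) ^ ((k : ℝ) * α)) *
      ENNReal.ofReal (luxNorm Set.univ q fun x => f x * chiTilde n k x)) ^ p) ^ (1 / p)

/-- The non-homogeneous weak Herz norm `‖f‖_{WK^{α,p}_{q(·)}}`. -/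
def weakHerzNormNH {n : ℕ} (α p : ℝ) (q f : Vn n → ℝ) : ℝ≥0∞ :=
  ⨆ lam : {l : ℝ // 0 < l},
    ENNReal.ofReal lam.1 *
      ((ENNReal.ofReal (luxNorm Set.univ q (chiS {x ∈ Bk n 0 | lam.1 < |f x|}))) ^ p +
        ∑' k : {k : ℕ // 1 ≤ k}, (ENNReal.ofReal ((2 : ℝ) ^ ((k.1 : ℝ) * α)) *
          ENNReal.ofReal (luxNorm Set.univ q (chiS {x ∈ Ak n (k.1 : ℤ) | lam.1 < |f x|}))) ^ p) ^
        (1 / p)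

/-- A dyadic central `(α, q(·))`-atom supported in `B_k`, with moments up to order `s`
vanishing. -/
def IsCentralAtom {n : ℕ} (q : Vn n → ℝ) (α : ℝ) (s : ℕ) (k : ℤ) (a : Vn n → ℝ) : Prop :=
  Measurable a ∧ (∀ x, x ∉ Bk n k → a x = 0) ∧
    luxNorm Set.univ q a ≤ (volume (Bk n k)).toReal ^ (-(α / (n : ℝ))) ∧
    ∀ β : Fin n → ℕ, (∑ i, β i) ≤ s → ∫ x, a x * ∏ i, x i ^ β i = 0

/-- Partial derivative in the `i`-th coordinate direction. -/
def pDeriv {n : ℕ} (i : Fin n) (f : Vn n → ℝ) : Vn n → ℝ :=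
  fun x => fderiv ℝ f x (EuclideanSpace.single i (1 : ℝ))

/-- Iterated partial derivative `D^β` for a multi-index `β`. -/
def mDeriv {n : ℕ} (β : Fin n → ℕ) (f : Vn n → ℝ) : Vn n → ℝ :=
  (List.finRange n).foldr (fun i g => (pDeriv i)^[β i] g) f

/-- The class `𝒜_N` of Schwartz functions `φ` with
`sup_{|a|,|b| ≤ N} |x^a D^b φ(x)| ≤ 1`. -/
def InClassA {n : ℕ} (N : ℕ) (φ : Vn n → ℝ) : Prop :=
  (∃ ψ : SchwartzMap (Vn n) ℝ, ⇑ψ = φ) ∧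
    ∀ a b : Fin n → ℕ, (∑ i, a i) ≤ N → (∑ i, b i) ≤ N →
      ∀ x : Vn n, |(∏ i, x i ^ a i) * mDeriv b φ x| ≤ 1

/-- The grand maximal function `G_N(g)(x) = sup_{φ ∈ 𝒜_N} sup_{|y-x|<t} |(g ∗ φ_t)(y)|`. -/
def grandMax {n : ℕ} (N : ℕ) (g : Vn n → ℝ) (x : Vn n) : ℝ :=
  ⨆ φ : {φ : Vn n → ℝ // InClassA N φ},
    ⨆ yt : {yt : Vn n × ℝ // 0 < yt.2 ∧ dist x yt.1 < yt.2},
      |∫ z, g z * ((yt.1.2 ^ n)⁻¹ * φ.1 ((yt.1.2)⁻¹ • (yt.1.1 - z)))|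

/-! ### Stopping-time expansion of a set inside a ball -/

/-- Proved by scaling rather than from null spheres, so that it includes `n = 0`. -/
lemma vol_cb {n : ℕ} (z : Vn n) {s : ℝ} (hs : 0 < s) :
    volume (closedBall z s) = volume (ball z s) := by
  rw [Measure.addHaar_closedBall _ _ hs.le, Measure.addHaar_ball_of_pos _ _ hs]

lemma vol_cb_mul {n : ℕ} (z w : Vn n) {s : ℝ} (hs : 0 < s) (m : ℕ) (hm : 0 < m) :
    volume (closedBall z (m * s)) = (m : ℝ≥0∞) ^ n * volume (ball w s) := by
  rw [Measure.addHaar_closedBall _ _ (by positivity), Measure.addHaar_ball_of_pos _ _ hs,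
    mul_pow, ENNReal.ofReal_mul (by positivity), mul_assoc, finrank_euclideanSpace_fin,
    ENNReal.ofReal_pow (by positivity), ENNReal.ofReal_natCast]

/-- A set filling at most half of a ball `B` is covered, up to a null set, by balls inside `B` in
which its density lies between `2^{-(n+1)}` and `1/2`. The candidates at a point `x` are the
images of `B` under the homotheties of ratio `2^{-k}` centred at `x`: they are nested, stay inside
`B`, and shrink to `x`, so by the Lebesgue density theorem the density of the set eventually
exceeds `1/2`. The ball just before the first such index works. -/
lemma exists_stopping_ball {n : ℕ} {c : Vn n} {r : ℝ} (hr : 0 < r) {S : Set (Vn n)}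
    (hS : S ⊆ ball c r) (hsmall : 2 * volume S ≤ volume (ball c r)) :
    ∀ᵐ x ∂(volume.restrict S), x ∈ S → ∃ z s, 0 < s ∧ s ≤ r ∧ x ∈ ball z s ∧
      ball z s ⊆ ball c r ∧ 2 * volume (S ∩ ball z s) ≤ volume (ball z s) ∧
      volume (ball z s) ≤ 2 ^ (n + 1) * volume (S ∩ ball z s) := by
  filter_upwards [IsUnifLocDoublingMeasure.ae_tendsto_measure_inter_div (volume : Measure (Vn n))
    S 1] with x hx hxS
  have hxc : dist x c < r := hS hxS
  set t : ℕ → ℝ := fun k => (1 / 2 : ℝ) ^ k with ht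
  set w : ℕ → Vn n := fun k => x + t k • (c - x) with hw
  have ht0 : ∀ k, 0 < t k := fun k => by positivity
  have ht1 : ∀ k, t k ≤ 1 := fun k => pow_le_one₀ (by norm_num) (by norm_num)
  have hts : ∀ k, t k = 2 * t (k + 1) := fun k => by simp only [ht, pow_succ]; ring
  have hdw : ∀ k, dist x (w k) = t k * dist x c := fun k => by
    rw [hw, dist_eq_norm, dist_eq_norm, sub_add_cancel_left, norm_neg, norm_smul,
      Real.norm_of_nonneg (ht0 k).le, norm_sub_rev]
  have hxin : ∀ k, x ∈ ball (w k) (t k * r) := fun k => by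
    rw [mem_ball, hdw]; exact mul_lt_mul_of_pos_left hxc (ht0 k)
  have hwc : ∀ k, dist (w k) c = (1 - t k) * dist x c := fun k => by
    have : w k - c = (1 - t k) • (x - c) := by rw [hw]; module
    rw [dist_eq_norm, dist_eq_norm, this, norm_smul, Real.norm_of_nonneg (by linarith [ht1 k])]
  have hww : ∀ k, dist (w (k + 1)) (w k) = t (k + 1) * dist x c := fun k => by
    have : w (k + 1) - w k = t (k + 1) • (x - c) := by
      simp only [hw, hts k]; module
    rw [dist_eq_norm, dist_eq_norm, this, norm_smul, Real.norm_of_nonneg (ht0 _).le]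
  have hlim : Tendsto (fun k => t k * r) atTop (nhdsWithin 0 (Ioi 0)) := by
    refine tendsto_nhdsWithin_iff.2 ⟨?_, Eventually.of_forall fun k => mul_pos (ht0 k) hr⟩
    have h := (tendsto_pow_atTop_nhds_zero_of_lt_one (r := (1 / 2 : ℝ)) (by norm_num)
      (by norm_num)).mul_const r
    rwa [zero_mul] at h
  have hd := hx w (fun k => t k * r) hlim
    (Eventually.of_forall fun k => by rw [one_mul]; exact ball_subset_closedBall (hxin k))
  -- Densities are tested on closed balls, the form in which the density theorem is available.
  have hev := hd.eventually (lt_mem_nhds (show (2 : ℝ≥0∞)⁻¹ < 1 by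
    exact ENNReal.inv_lt_one.2 (by norm_num)))
  have hpos : ∀ k, 0 < t k * r := fun k => mul_pos (ht0 k) hr
  have hQ : ∃ k, volume (closedBall (w k) (t k * r)) <
      2 * volume (S ∩ closedBall (w k) (t k * r)) := by
    obtain ⟨k, hk⟩ := hev.exists
    refine ⟨k, ?_⟩
    have h1 := (ENNReal.lt_div_iff_mul_lt
      (Or.inl (measure_closedBall_pos volume (w k) (hpos k)).ne')
      (Or.inl (measure_closedBall_lt_top (μ := volume)).ne)).1 hk
    have h2 := (ENNReal.mul_lt_mul_iff_right (a := 2) (by norm_num) (by norm_num)).2 h1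
    rwa [← mul_assoc, ENNReal.mul_inv_cancel (by norm_num) (by norm_num), one_mul] at h2
  classical
  have hk0 : Nat.find hQ ≠ 0 := by
    intro h0
    have h1 := Nat.find_spec hQ
    rw [h0] at h1
    have hw0 : w 0 = c := by simp [hw, ht]
    have ht00 : t 0 * r = r := by simp [ht]
    rw [hw0, ht00, vol_cb _ hr] at h1
    exact absurd (h1.trans_le (mul_le_mul_right (measure_mono inter_subset_left) 2))
      (not_lt.2 hsmall)
  obtain ⟨k, hk⟩ := Nat.exists_eq_succ_of_ne_zero hk0
  have hQk1 := Nat.find_spec hQ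
  have hQk := Nat.find_min hQ (m := k) (by omega)
  rw [hk, Nat.succ_eq_add_one] at hQk1
  rw [not_lt] at hQk
  refine ⟨w k, t k * r, hpos k, by nlinarith [ht1 k], hxin k, ?_, ?_, ?_⟩
  · refine ball_subset_ball' ?_
    rw [hwc]; nlinarith [ht1 k, ht0 k]
  · rw [← vol_cb _ (hpos k)]
    exact (mul_le_mul_right (measure_mono
      (inter_subset_inter_right S ball_subset_closedBall)) 2).trans hQk
  · have hsub : closedBall (w (k + 1)) (t (k + 1) * r) ⊆ ball (w k) (t k * r) := by
      refine closedBall_subset_ball' ?_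
      rw [hww, hts k]; nlinarith [ht0 (k + 1)]
    have h2 := vol_cb_mul (w k) (w (k + 1)) (hpos (k + 1)) 2 (by norm_num)
    rw [Nat.cast_ofNat, ← mul_assoc, ← hts, vol_cb _ (hpos k), ← vol_cb _ (hpos (k + 1))] at h2
    rw [h2, pow_succ, mul_assoc]
    refine mul_le_mul_right (hQk1.le.trans (mul_le_mul_right (measure_mono ?_) 2)) _
    exact inter_subset_inter_right S hsub

/-- The set `S₁` is the union of all balls inside the given one in which `S` has density
between `2^{-(n+1)}` and `1/2`; its volume is controlled by the Vitali covering lemma. Every point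
of `S₁` lies in a ball at least half of which is filled by `S₁ \ S`. -/
lemma exists_expansion {n : ℕ} {c : Vn n} {r : ℝ} (hr : 0 < r) {S : Set (Vn n)}
    (hS : S ⊆ ball c r) (hSm : MeasurableSet S) (hsmall : 2 * volume S ≤ volume (ball c r)) :
    ∃ S₁, MeasurableSet S₁ ∧ S₁ ⊆ ball c r ∧ volume (S \ S₁) = 0 ∧
      volume S₁ ≤ 5 ^ n * 2 ^ (n + 1) * volume S ∧
      ∀ x ∈ S₁, ∃ z s, 0 < s ∧ x ∈ ball z s ∧
        volume (ball z s) ≤ 2 * volume (ball z s ∩ (S₁ \ S)) := by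
  set T : Set (Vn n × ℝ) := {a | 0 < a.2 ∧ a.2 ≤ r ∧ ball a.1 a.2 ⊆ ball c r ∧
    2 * volume (S ∩ ball a.1 a.2) ≤ volume (ball a.1 a.2) ∧
    volume (ball a.1 a.2) ≤ 2 ^ (n + 1) * volume (S ∩ ball a.1 a.2)} with hT
  set S₁ : Set (Vn n) := ⋃ a ∈ T, ball a.1 a.2 with hS₁
  have hopen : IsOpen S₁ := isOpen_biUnion fun a _ => isOpen_ball
  refine ⟨S₁, hopen.measurableSet, iUnion₂_subset fun a ha => ha.2.2.1, ?_, ?_, ?_⟩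
  · have h := exists_stopping_ball hr hS hsmall
    rw [ae_restrict_iff' hSm] at h
    refine measure_mono_null ?_ h
    rintro x ⟨hxS, hx1⟩ hx
    obtain ⟨z, s, h0, h1, h2, h3, h4, h5⟩ := hx hxS hxS
    exact hx1 (mem_biUnion (show (z, s) ∈ T from ⟨h0, h1, h3, h4, h5⟩) h2)
  · obtain ⟨u, huT, hdisj, hcov⟩ :=
      Vitali.exists_disjoint_subfamily_covering_enlargement_closedBall T
        (fun a => a.1) (fun a => a.2) r (fun a ha => ha.2.1) 5 (by norm_num)
    have hcount : u.Countable := hdisj.countable_of_nonempty_interior fun a ha =>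
      ⟨a.1, ball_subset_interior_closedBall (mem_ball_self (huT ha).1)⟩
    have hsub : S₁ ⊆ ⋃ b ∈ u, closedBall b.1 (5 * b.2) := by
      refine iUnion₂_subset fun a ha => ?_
      obtain ⟨b, hb, hab⟩ := hcov a ha
      exact ball_subset_closedBall.trans (hab.trans
        (subset_biUnion_of_mem (u := fun b : Vn n × ℝ => closedBall b.1 (5 * b.2)) hb))
    calc volume S₁ ≤ volume (⋃ b ∈ u, closedBall b.1 (5 * b.2)) := measure_mono hsub
      _ ≤ ∑' b : u, volume (closedBall b.1.1 (5 * b.1.2)) := measure_biUnion_le _ hcount _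
      _ ≤ ∑' b : u, 5 ^ n * 2 ^ (n + 1) * volume (S ∩ ball b.1.1 b.1.2) := by
          refine ENNReal.tsum_le_tsum fun b => ?_
          have := vol_cb_mul b.1.1 b.1.1 (huT b.2).1 5 (by norm_num)
          rw [Nat.cast_ofNat, Nat.cast_ofNat] at this
          rw [this, mul_assoc]
          exact mul_le_mul_right (huT b.2).2.2.2.2 _
      _ = 5 ^ n * 2 ^ (n + 1) * volume (⋃ b ∈ u, S ∩ ball b.1 b.2) := by
          rw [ENNReal.tsum_mul_left, measure_biUnion hcount]
          · exact fun a ha b hb hab => (hdisj ha hb hab).mono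
              (inter_subset_right.trans ball_subset_closedBall)
              (inter_subset_right.trans ball_subset_closedBall)
          · exact fun b _ => hSm.inter measurableSet_ball
      _ ≤ _ := mul_le_mul_right (measure_mono (iUnion₂_subset fun b _ => inter_subset_left)) _
  · intro x hx
    obtain ⟨a, ha, hxa⟩ := mem_iUnion₂.1 hx
    refine ⟨a.1, a.2, ha.1, hxa, ?_⟩
    have hsub : ball a.1 a.2 ⊆ S₁ :=
      subset_biUnion_of_mem (u := fun a : Vn n × ℝ => ball a.1 a.2) ha
    have heq : ball a.1 a.2 ∩ (S₁ \ S) = ball a.1 a.2 \ S := by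
      ext y; exact ⟨fun h => ⟨h.1, h.2.2⟩, fun h => ⟨h.1, hsub h.1, h.2⟩⟩
    rw [heq]
    have hadd := measure_inter_add_sdiff (μ := volume) (ball a.1 a.2) hSm
    have hle := ha.2.2.2.1
    rw [inter_comm S] at hle
    have hfin : volume (ball a.1 a.2 ∩ S) ≠ ∞ :=
      ((measure_mono inter_subset_left).trans_lt measure_ball_lt_top).ne
    rw [← hadd, two_mul] at hle
    have h3 := (ENNReal.add_le_add_iff_left hfin).1 hle
    rw [← hadd, two_mul]
    exact add_le_add_left h3 _

/-! ### Luxemburg norms of characteristic functions -/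

/-- The modular `∫_S η^{-p(x)} dx` of `χ_S / η`. -/
def chiMod {n : ℕ} (p : Vn n → ℝ) (S : Set (Vn n)) (η : ℝ) : ℝ≥0∞ :=
  ∫⁻ x in S, ENNReal.ofReal (η⁻¹ ^ p x)

lemma lintegral_chiS {n : ℕ} {p : Vn n → ℝ} (hp1 : ∀ x, 1 ≤ p x) {S : Set (Vn n)}
    (hS : MeasurableSet S) (η : ℝ) :
    ∫⁻ x in univ, ENNReal.ofReal ((|chiS S x| / η) ^ p x) = chiMod p S η := by
  rw [chiMod, ← lintegral_indicator hS, Measure.restrict_univ]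
  refine lintegral_congr fun x => ?_
  by_cases hx : x ∈ S
  · simp [chiS, hx]
  · simp [chiS, hx, Real.zero_rpow (by linarith [hp1 x] : p x ≠ 0)]

lemma luxNorm_chiS {n : ℕ} {p : Vn n → ℝ} (hp1 : ∀ x, 1 ≤ p x) {S : Set (Vn n)}
    (hS : MeasurableSet S) :
    luxNorm univ p (chiS S) = sInf {η | 0 < η ∧ chiMod p S η ≤ 1} := by
  simp_rw [luxNorm, lintegral_chiS hp1 hS]

lemma bddBelow_pos (q : ℝ → Prop) : BddBelow {η : ℝ | 0 < η ∧ q η} :=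
  ⟨0, fun _ h => h.1.le⟩

lemma luxNorm_nonneg {n : ℕ} (p f : Vn n → ℝ) : 0 ≤ luxNorm univ p f :=
  Real.sInf_nonneg fun _ h => h.1.le

lemma luxNorm_chiS_le {n : ℕ} {p : Vn n → ℝ} (hp1 : ∀ x, 1 ≤ p x) {S : Set (Vn n)}
    (hS : MeasurableSet S) {η : ℝ} (hη : 0 < η) (h : chiMod p S η ≤ 1) :
    luxNorm univ p (chiS S) ≤ η := by
  rw [luxNorm_chiS hp1 hS]
  exact csInf_le (bddBelow_pos _) ⟨hη, h⟩

/-- The infimum defining the norm of the characteristic function of a set of finite measure is not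
the junk value of an empty infimum. -/
lemma exists_chiMod_le {n : ℕ} {p : Vn n → ℝ} (hp1 : ∀ x, 1 ≤ p x) {S : Set (Vn n)}
    (hfin : volume S ≠ ∞) : {η | 0 < η ∧ chiMod p S η ≤ 1}.Nonempty := by
  set η : ℝ := max 1 (volume S).toReal with hη
  have h1 : 1 ≤ η := le_max_left _ _
  have h0 : 0 < η := by linarith
  refine ⟨η, h0, ?_⟩
  calc chiMod p S η ≤ ∫⁻ x in S, ENNReal.ofReal η⁻¹ := by
        refine lintegral_mono fun x => ENNReal.ofReal_le_ofReal ?_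
        exact (Real.rpow_le_rpow_of_exponent_ge (by positivity) (inv_le_one_of_one_le₀ h1)
          (hp1 x)).trans_eq (Real.rpow_one _)
    _ = ENNReal.ofReal η⁻¹ * volume S := setLIntegral_const _ _
    _ ≤ ENNReal.ofReal η⁻¹ * ENNReal.ofReal η := by
        refine mul_le_mul_right ?_ _
        rw [← ENNReal.ofReal_toReal hfin]
        exact ENNReal.ofReal_le_ofReal (le_max_right _ _)
    _ = 1 := by
        rw [← ENNReal.ofReal_mul (by positivity), inv_mul_cancel₀ h0.ne', ENNReal.ofReal_one]

lemma chiMod_mono {n : ℕ} (p : Vn n → ℝ) {S T : Set (Vn n)} (hT : MeasurableSet T)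
    (h : volume (S \ T) = 0) (η : ℝ) : chiMod p S η ≤ chiMod p (T ∩ S) η := by
  rw [chiMod, ← lintegral_inter_add_sdiff _ S hT, setLIntegral_measure_zero _ _ h, add_zero,
    inter_comm, chiMod]

lemma luxNorm_chiS_mono {n : ℕ} {p : Vn n → ℝ} (hp1 : ∀ x, 1 ≤ p x) {S T : Set (Vn n)}
    (hS : MeasurableSet S) (hT : MeasurableSet T) (hfin : volume T ≠ ∞)
    (h : volume (S \ T) = 0) :
    luxNorm univ p (chiS S) ≤ luxNorm univ p (chiS T) := by
  rw [luxNorm_chiS hp1 hS, luxNorm_chiS hp1 hT]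
  refine csInf_le_csInf (bddBelow_pos _) (exists_chiMod_le hp1 hfin) ?_
  rintro η ⟨h0, h1⟩
  exact ⟨h0, (chiMod_mono p hT h η).trans ((lintegral_mono_set inter_subset_left).trans h1)⟩

lemma luxNorm_chiS_null {n : ℕ} {p : Vn n → ℝ} (hp1 : ∀ x, 1 ≤ p x) {S : Set (Vn n)}
    (hS : MeasurableSet S) (h : volume S = 0) : luxNorm univ p (chiS S) = 0 := by
  refine le_antisymm (le_of_forall_gt_imp_ge_of_dense fun η hη => ?_) (luxNorm_nonneg _ _)
  refine luxNorm_chiS_le hp1 hS hη ?_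
  rw [chiMod, setLIntegral_measure_zero _ _ h]
  exact zero_le_one

lemma chiMod_scale {n : ℕ} {p : Vn n → ℝ} {P : ℝ} (hP : ∀ᵐ x, p x ≤ P) (S : Set (Vn n))
    {l η : ℝ} (hl : 0 < l) (hl1 : l ≤ 1) (hη : 0 < η) :
    chiMod p S (l * η) ≤ ENNReal.ofReal (l⁻¹ ^ P) * chiMod p S η := by
  rw [chiMod, chiMod, ← lintegral_const_mul' _ _ ENNReal.ofReal_ne_top]
  refine lintegral_mono_ae ?_
  filter_upwards [ae_restrict_of_ae hP] with x hx
  rw [← ENNReal.ofReal_mul (by positivity), mul_inv, Real.mul_rpow (by positivity) (by positivity)]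
  refine ENNReal.ofReal_le_ofReal (mul_le_mul_of_nonneg_right ?_ (by positivity))
  exact Real.rpow_le_rpow_of_exponent_le ((one_le_inv₀ hl).2 hl1) hx

/-- If `T \ S` carries a fixed fraction of the norm of `χ_T`, then `S` has strictly smaller norm
than `T`, by a factor depending only on `A` and the bound `P` of the exponent. At `η` just above
`‖χ_T‖` the modular of `T` is at most `1`, and that of `T \ S` is at least `(2A)^{-P}`, so `S` has
modular at most `1 - (2A)^{-P}`, which rescales to the stated bound. -/
lemma luxNorm_contract {n : ℕ} {p : Vn n → ℝ} (hp1 : ∀ x, 1 ≤ p x) {P : ℝ} (hP0 : 0 < P)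
    (hP : ∀ᵐ x, p x ≤ P) {S T : Set (Vn n)} (hS : MeasurableSet S) (hT : MeasurableSet T)
    (hfin : volume T ≠ ∞) (hST : volume (S \ T) = 0) {A : ℝ} (hA : 1 ≤ A)
    (h : luxNorm univ p (chiS T) ≤ A * luxNorm univ p (chiS (T \ S))) :
    luxNorm univ p (chiS S) ≤
      (1 - ((2 * A)⁻¹) ^ P) ^ P⁻¹ * luxNorm univ p (chiS T) := by
  set l : ℝ := (2 * A)⁻¹ with hl
  have hl0 : 0 < l := by positivity
  have hl1 : l < 1 := inv_lt_one_of_one_lt₀ (by linarith)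
  have hlP : l ^ P < 1 := Real.rpow_lt_one hl0.le hl1 hP0
  have hlP0 : 0 < l ^ P := by positivity
  set θ : ℝ := (1 - l ^ P) ^ P⁻¹ with hθ
  have hθ0 : 0 < θ := Real.rpow_pos_of_pos (by linarith) _
  have hθ1 : θ ≤ 1 := Real.rpow_le_one (by linarith) (by linarith) (by positivity)
  have hθP : θ ^ P = 1 - l ^ P := Real.rpow_inv_rpow (by linarith) hP0.ne'
  set N := luxNorm univ p (chiS T) with hN
  rcases (luxNorm_nonneg p (chiS T)).eq_or_lt with h0 | h0
  · have := luxNorm_chiS_mono hp1 hS hT hfin hST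
    rw [hN, ← h0, mul_zero]
    rwa [← h0] at this
  rw [← div_le_iff₀' hθ0]
  refine le_of_forall_gt_imp_ge_of_dense fun y hy => ?_
  rw [← hN] at h0
  -- The bound `2 * N` keeps `η / (2 * A)` below the norm of the characteristic function of `T \ S`.
  have hlt : sInf {η | 0 < η ∧ chiMod p T η ≤ 1} < min y (2 * N) := by
    rw [← luxNorm_chiS hp1 hT]
    exact lt_min hy (by linarith)
  obtain ⟨η, ⟨hη0, hη1⟩, hηlt⟩ := exists_lt_of_csInf_lt (exists_chiMod_le hp1 hfin) hlt
  rw [div_le_iff₀' hθ0]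
  have hgt : 1 < chiMod p (T \ S) (l * η) := by
    by_contra! hle
    have h1 := luxNorm_chiS_le hp1 (hT.diff hS) (by positivity) hle
    have h2 : N ≤ A * (l * η) := h.trans (by gcongr)
    have h3 : A * (l * η) = η / 2 := by rw [hl]; field_simp
    linarith [hηlt.trans_le (min_le_right _ _)]
  have hD : ENNReal.ofReal (l ^ P) ≤ chiMod p (T \ S) η := by
    have h1 := mul_le_mul_right (hgt.le.trans (chiMod_scale hP (T \ S) hl0 hl1.le hη0))
      (ENNReal.ofReal (l ^ P))
    rwa [mul_one, ← mul_assoc, ← ENNReal.ofReal_mul hlP0.le, Real.inv_rpow hl0.le,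
      mul_inv_cancel₀ hlP0.ne', ENNReal.ofReal_one, one_mul] at h1
  have hS1 : chiMod p S η ≤ ENNReal.ofReal (1 - l ^ P) := by
    rw [ENNReal.ofReal_sub _ hlP0.le, ENNReal.ofReal_one]
    refine ENNReal.le_sub_of_add_le_right ENNReal.ofReal_ne_top ?_
    calc chiMod p S η + ENNReal.ofReal (l ^ P)
        ≤ chiMod p (T ∩ S) η + chiMod p (T \ S) η := add_le_add (chiMod_mono p hT hST η) hD
      _ = chiMod p T η := lintegral_inter_add_sdiff _ _ hS
      _ ≤ 1 := hη1
  have hfinal : chiMod p S (θ * η) ≤ 1 := by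
    refine (chiMod_scale hP S hθ0 hθ1 hη0).trans ((mul_le_mul_right hS1 _).trans_eq ?_)
    rw [← hθP, ← ENNReal.ofReal_mul (by positivity), Real.inv_rpow hθ0.le,
      inv_mul_cancel₀ (by positivity), ENNReal.ofReal_one]
  refine (luxNorm_chiS_le hp1 hS (by positivity) hfinal).trans ?_
  exact mul_le_mul_of_nonneg_left (hηlt.le.trans (min_le_left _ _)) hθ0.le

/-! ### The maximal function of a bounded set -/

lemma setIntegral_abs_chiS {n : ℕ} {D B : Set (Vn n)} (hD : MeasurableSet D) :
    ∫ y in B ∩ univ, |chiS D y| = (volume (B ∩ D)).toReal := by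
  have h : (fun y => |chiS D y|) = D.indicator fun _ => (1 : ℝ) := by
    ext y
    by_cases hy : y ∈ D <;> simp [chiS, hy]
  rw [h, inter_univ, setIntegral_indicator hD]
  simp [Measure.real]

lemma avg_le_one {n : ℕ} (D : Set (Vn n)) (z : Vn n) (s : ℝ) :
    (volume (ball z s)).toReal⁻¹ * (volume (ball z s ∩ D)).toReal ≤ 1 := by
  rw [inv_mul_eq_div]
  exact div_le_one_of_le₀ (ENNReal.toReal_mono measure_ball_lt_top.ne
    (measure_mono inter_subset_left)) ENNReal.toReal_nonneg

/-- The averages are bounded by `1`, so the supremum defining `maxOp` is a genuine one. -/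
lemma avg_le_maxOp {n : ℕ} {D : Set (Vn n)} (hD : MeasurableSet D) {x z : Vn n} {s : ℝ}
    (hs : 0 < s) (hx : x ∈ ball z s) :
    (volume (ball z s)).toReal⁻¹ * (volume (ball z s ∩ D)).toReal ≤ maxOp univ (chiS D) x := by
  rw [← setIntegral_abs_chiS hD]
  refine le_ciSup (f := fun B : {B : Set (Vn n) // (∃ c r, 0 < r ∧ B = ball c r) ∧ x ∈ B} =>
    (volume B.1).toReal⁻¹ * ∫ y in B.1 ∩ univ, |chiS D y|) ?_ ⟨ball z s, ⟨z, s, hs, rfl⟩, hx⟩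
  refine ⟨1, ?_⟩
  rintro _ ⟨⟨_, ⟨z, s, -, rfl⟩, -⟩, rfl⟩
  dsimp only
  rw [setIntegral_abs_chiS hD]
  exact avg_le_one D z s

lemma maxOp_nonneg {n : ℕ} (f : Vn n → ℝ) (x : Vn n) : 0 ≤ maxOp univ f x := by
  refine Real.iSup_nonneg fun B => mul_nonneg (by positivity) ?_
  exact integral_nonneg fun _ => abs_nonneg _

lemma maxOp_decay {n : ℕ} {D : Set (Vn n)} (hD : MeasurableSet D) {c : Vn n} {r : ℝ}
    (hr : 0 < r) (hDc : D ⊆ ball c r) :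
    ∃ C : ℝ, 1 ≤ C ∧ ∀ x, maxOp univ (chiS D) x ≤ C * ((1 + ‖x‖) ^ n)⁻¹ := by
  set v : ℝ := (volume (ball (0 : Vn n) 1)).toReal with hv
  have hv0 : 0 < v := ENNReal.toReal_pos (measure_ball_pos volume 0 one_pos).ne'
    measure_ball_lt_top.ne
  set d : ℝ := (volume D).toReal with hd
  have hd0 : 0 ≤ d := ENNReal.toReal_nonneg
  have hDfin : volume D ≠ ∞ := ((measure_mono hDc).trans_lt measure_ball_lt_top).ne
  set R : ℝ := ‖c‖ + r with hR
  have hR0 : 0 ≤ R := by positivity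
  have h3 : (1 : ℝ) ≤ (3 + R) ^ n := one_le_pow₀ (by linarith)
  refine ⟨(1 + d / v) * (3 + R) ^ n, ?_, fun x => ?_⟩
  · have : 0 ≤ d / v := by positivity
    nlinarith
  have : Nonempty {B : Set (Vn n) // (∃ c r, 0 < r ∧ B = ball c r) ∧ x ∈ B} :=
    ⟨⟨ball x 1, ⟨x, 1, one_pos, rfl⟩, mem_ball_self one_pos⟩⟩
  refine ciSup_le ?_
  rintro ⟨_, ⟨z, s, hs, rfl⟩, hx⟩
  dsimp only
  rw [setIntegral_abs_chiS hD]
  rcases (ball z s ∩ D).eq_empty_or_nonempty with he | ⟨y, hyB, hyD⟩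
  · rw [he, measure_empty, ENNReal.toReal_zero, mul_zero]
    positivity
  rw [← div_eq_mul_inv, le_div_iff₀ (by positivity)]
  have hy : ‖y‖ ≤ R := by
    have h1 := mem_ball_iff_norm.1 (hDc hyD)
    have h2 := norm_le_norm_add_norm_sub' y c
    linarith
  have hxy : ‖x‖ ≤ R + 2 * s := by
    have h1 : dist x y < s + s := (dist_triangle_right x y z).trans_lt (add_lt_add hx hyB)
    rw [dist_eq_norm] at h1
    have h2 := norm_le_norm_add_norm_sub' x y
    linarith
  have hvol : (volume (ball z s)).toReal = s ^ n * v := by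
    rw [Measure.addHaar_ball_of_pos _ _ hs, ENNReal.toReal_mul, finrank_euclideanSpace_fin,
      ENNReal.toReal_ofReal (by positivity)]
  have hdv : 0 ≤ d / v := by positivity
  -- For large radii the volume of the ball gives the decay; for small ones `x` stays bounded.
  rcases le_total 1 s with h1s | hs1
  · have h1 : (volume (ball z s ∩ D)).toReal ≤ d :=
      ENNReal.toReal_mono hDfin (measure_mono inter_subset_right)
    have h2 : (1 + ‖x‖) ^ n ≤ (3 + R) ^ n * s ^ n := by
      rw [← mul_pow]
      exact pow_le_pow_left₀ (by positivity) (by nlinarith) n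
    rw [hvol]
    calc (s ^ n * v)⁻¹ * (volume (ball z s ∩ D)).toReal * (1 + ‖x‖) ^ n
        ≤ (s ^ n * v)⁻¹ * d * ((3 + R) ^ n * s ^ n) := by gcongr
      _ = d / v * (3 + R) ^ n := by field_simp
      _ ≤ _ := by gcongr; linarith
  · have h2 : (1 + ‖x‖) ^ n ≤ (3 + R) ^ n :=
      pow_le_pow_left₀ (by positivity) (by linarith) n
    calc _ ≤ 1 * (3 + R) ^ n := mul_le_mul (avg_le_one D z s) h2 (by positivity) zero_le_one
      _ ≤ _ := by gcongr; linarith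

lemma lintegral_decay {n : ℕ} {q : ℝ} (hq : 1 < q) :
    ∫⁻ x : Vn n, ENNReal.ofReal ((((1 + ‖x‖) ^ n)⁻¹) ^ q) < ∞ := by
  rcases Nat.eq_zero_or_pos n with rfl | hn
  · simp
  · have h := finite_integral_one_add_norm (E := Vn n) (μ := volume) (r := n * q) (by
      rw [finrank_euclideanSpace_fin]
      have : (0 : ℝ) < n := Nat.cast_pos.2 hn
      nlinarith)
    refine (lintegral_congr fun x => ?_).trans_lt h
    rw [Real.inv_rpow (by positivity), ← Real.rpow_natCast, ← Real.rpow_mul (by positivity),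
      Real.rpow_neg (by positivity)]

/-- The maximal function of a bounded set has finite norm because the exponent stays above some
`q > 1`. Without this the infimum defining `luxNorm` could be over the empty set, with value `0`,
and the boundedness hypothesis would say nothing. -/
lemma exists_maxOp_admissible {n : ℕ} {p : Vn n → ℝ} (hp1 : ∀ x, 1 ≤ p x) {q : ℝ} (hq : 1 < q)
    (hpq : ∀ᵐ x, q ≤ p x) {D : Set (Vn n)} (hD : MeasurableSet D) {c : Vn n} {r : ℝ}
    (hr : 0 < r) (hDc : D ⊆ ball c r) :
    ∃ η : ℝ, 0 < η ∧
      ∫⁻ x in univ, ENNReal.ofReal ((|maxOp univ (chiS D) x| / η) ^ p x) ≤ 1 := by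
  obtain ⟨C, hC1, hC⟩ := maxOp_decay hD hr hDc
  set I := ∫⁻ x : Vn n, ENNReal.ofReal ((((1 + ‖x‖) ^ n)⁻¹) ^ q) with hI
  have hIfin : I < ∞ := lintegral_decay hq
  set J : ℝ := max 1 I.toReal with hJ
  have hJ1 : 1 ≤ J := le_max_left _ _
  have hIJ : I ≤ ENNReal.ofReal J := by
    rw [← ENNReal.ofReal_toReal hIfin.ne]
    exact ENNReal.ofReal_le_ofReal (le_max_right _ _)
  refine ⟨C * J, by positivity, ?_⟩
  rw [Measure.restrict_univ]
  calc ∫⁻ x, ENNReal.ofReal ((|maxOp univ (chiS D) x| / (C * J)) ^ p x)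
      ≤ ∫⁻ x : Vn n, ENNReal.ofReal J⁻¹ * ENNReal.ofReal ((((1 + ‖x‖) ^ n)⁻¹) ^ q) := by
        refine lintegral_mono_ae ?_
        filter_upwards [hpq] with x hx
        rw [← ENNReal.ofReal_mul (by positivity)]
        refine ENNReal.ofReal_le_ofReal ?_
        have hu0 : 0 < ((1 + ‖x‖) ^ n)⁻¹ := by positivity
        have hu1 : ((1 + ‖x‖) ^ n)⁻¹ ≤ 1 :=
          inv_le_one_of_one_le₀ (one_le_pow₀ (by linarith [norm_nonneg x]))
        have hM : |maxOp univ (chiS D) x| / (C * J) ≤ J⁻¹ * ((1 + ‖x‖) ^ n)⁻¹ := by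
          rw [abs_of_nonneg (maxOp_nonneg _ x), div_le_iff₀ (by positivity)]
          refine (hC x).trans_eq ?_
          field_simp
        calc (|maxOp univ (chiS D) x| / (C * J)) ^ p x
            ≤ (J⁻¹ * ((1 + ‖x‖) ^ n)⁻¹) ^ p x :=
              Real.rpow_le_rpow (by positivity) hM (by linarith [hp1 x])
          _ = J⁻¹ ^ p x * (((1 + ‖x‖) ^ n)⁻¹) ^ p x :=
              Real.mul_rpow (by positivity) hu0.le
          _ ≤ J⁻¹ * (((1 + ‖x‖) ^ n)⁻¹) ^ q := by
              refine mul_le_mul ?_ ?_ (by positivity) (by positivity)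
              · exact (Real.rpow_le_rpow_of_exponent_ge (by positivity)
                  (inv_le_one_of_one_le₀ hJ1) (hp1 x)).trans_eq (Real.rpow_one _)
              · exact Real.rpow_le_rpow_of_exponent_ge hu0 hu1 hx
    _ = ENNReal.ofReal J⁻¹ * I := lintegral_const_mul' _ _ ENNReal.ofReal_ne_top
    _ ≤ ENNReal.ofReal J⁻¹ * ENNReal.ofReal J := mul_le_mul_right hIJ _
    _ = 1 := by
        rw [← ENNReal.ofReal_mul (by positivity), inv_mul_cancel₀ (by positivity),
          ENNReal.ofReal_one]

/-- Boundedness of the maximal operator, in the form in which it is used: if every point of `E`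
lies in a ball of which `D` fills the fraction `ε`, then `ε χ_E` is dominated by the maximal function
of `χ_D`. -/
lemma luxNorm_le_of_avg {n : ℕ} {p : Vn n → ℝ} (hp1 : ∀ x, 1 ≤ p x) {q : ℝ} (hq : 1 < q)
    (hpq : ∀ᵐ x, q ≤ p x) {C : ℝ}
    (hC : ∀ f : Vn n → ℝ, MemLux univ p f →
      luxNorm univ p (maxOp univ f) ≤ C * luxNorm univ p f)
    {D E : Set (Vn n)} (hD : MeasurableSet D) (hE : MeasurableSet E) {c : Vn n} {r : ℝ}
    (hr : 0 < r) (hDc : D ⊆ ball c r) {ε : ℝ} (hε : 0 < ε)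
    (h : ∀ x ∈ E, ∃ z s, 0 < s ∧ x ∈ ball z s ∧
      ε ≤ (volume (ball z s)).toReal⁻¹ * (volume (ball z s ∩ D)).toReal) :
    ε * luxNorm univ p (chiS E) ≤ C * luxNorm univ p (chiS D) := by
  have hDfin : volume D ≠ ∞ := ((measure_mono hDc).trans_lt measure_ball_lt_top).ne
  have hmem : MemLux univ p (chiS D) := by
    refine ⟨measurable_const.indicator hD, ?_⟩
    obtain ⟨η, h0, h1⟩ := exists_chiMod_le hp1 hDfin
    exact ⟨η, h0, (lintegral_chiS hp1 hD η).trans_le h1⟩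
  refine le_trans ?_ (hC _ hmem)
  refine le_csInf (exists_maxOp_admissible hp1 hq hpq hD hr hDc) ?_
  rintro η ⟨hη, hη1⟩
  rw [mul_comm, ← le_div_iff₀ hε]
  refine luxNorm_chiS_le hp1 hE (by positivity) (le_trans ?_ hη1)
  rw [chiMod, Measure.restrict_univ]
  refine (setLIntegral_mono_ae' hE (Eventually.of_forall fun x hx => ?_)).trans
    (setLIntegral_le_lintegral E _)
  refine ENNReal.ofReal_le_ofReal (Real.rpow_le_rpow (by positivity) ?_ (by linarith [hp1 x]))
  obtain ⟨z, s, hs, hxz, hle⟩ := h x hx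
  rw [inv_div]
  gcongr
  exact (hle.trans (avg_le_maxOp hD hs hxz)).trans (le_abs_self _)

/-! ### Iteration -/

/-- Each expansion step multiplies the volume by at most `5^n 2^{n+1}`, and passing from the
expanded set back to the original one multiplies the norm by at most a fixed `θ < 1`. -/
lemma luxNorm_iterate {n : ℕ} {p : Vn n → ℝ} (hp1 : ∀ x, 1 ≤ p x) {P : ℝ} (hP0 : 0 < P)
    (hP : ∀ᵐ x, p x ≤ P) {q : ℝ} (hq : 1 < q) (hpq : ∀ᵐ x, q ≤ p x) {C : ℝ} (hC0 : 0 < C)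
    (hC : ∀ f : Vn n → ℝ, MemLux univ p f →
      luxNorm univ p (maxOp univ f) ≤ C * luxNorm univ p f)
    {c : Vn n} {r : ℝ} (hr : 0 < r) (k : ℕ) :
    ∀ S ⊆ ball c r, MeasurableSet S →
      (5 ^ n * 2 ^ (n + 1)) ^ k * volume S ≤ volume (ball c r) →
      luxNorm univ p (chiS S) ≤
        ((1 - ((2 * (1 + 2 * C))⁻¹) ^ P) ^ P⁻¹) ^ k * luxNorm univ p (chiS (ball c r)) := by
  induction k with
  | zero =>
    intro S hS hSm _
    rw [pow_zero, one_mul]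
    exact luxNorm_chiS_mono hp1 hSm measurableSet_ball measure_ball_lt_top.ne
      (by rw [sdiff_eq_empty.2 hS, measure_empty])
  | succ k ih =>
    intro S hS hSm hk
    have hK2 : (2 : ℝ≥0∞) ≤ 5 ^ n * 2 ^ (n + 1) := by
      calc (2 : ℝ≥0∞) = 1 * 2 ^ 1 := by norm_num
        _ ≤ 5 ^ n * 2 ^ (n + 1) := mul_le_mul' (one_le_pow₀ (by norm_num))
            (pow_le_pow_right₀ (by norm_num) (by omega))
    have hK1 : (1 : ℝ≥0∞) ≤ 5 ^ n * 2 ^ (n + 1) := le_trans (by norm_num) hK2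
    have hsmall : 2 * volume S ≤ volume (ball c r) := by
      refine le_trans (mul_le_mul_left ?_ _) hk
      calc (2 : ℝ≥0∞) ≤ 1 * (5 ^ n * 2 ^ (n + 1)) := by rwa [one_mul]
        _ ≤ _ := by
          rw [pow_succ]
          exact mul_le_mul_left (one_le_pow₀ hK1) _
    obtain ⟨T, hTm, hTB, hST, hTvol, hT⟩ := exists_expansion hr hS hSm hsmall
    have hTfin : volume T ≠ ∞ := ((measure_mono hTB).trans_lt measure_ball_lt_top).ne
    have hhalf := luxNorm_le_of_avg hp1 hq hpq hC (hTm.diff hSm) hTm hr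
      (sdiff_subset.trans hTB) (ε := 1 / 2) (by norm_num) (fun x hx => by
        obtain ⟨z, s, hs, hxz, hle⟩ := hT x hx
        refine ⟨z, s, hs, hxz, ?_⟩
        have hfin : volume (ball z s ∩ (T \ S)) ≠ ∞ :=
          ((measure_mono inter_subset_left).trans_lt measure_ball_lt_top).ne
        have hpos : 0 < (volume (ball z s)).toReal :=
          ENNReal.toReal_pos (measure_ball_pos volume z hs).ne' measure_ball_lt_top.ne
        have h1 := ENNReal.toReal_mono (ENNReal.mul_ne_top (by norm_num) hfin) hle
        rw [ENNReal.toReal_mul, ENNReal.toReal_ofNat] at h1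
        rw [inv_mul_eq_div, le_div_iff₀ hpos]
        linarith)
    have hstep := luxNorm_contract hp1 hP0 hP hSm hTm hTfin hST (A := 1 + 2 * C) (by linarith) (by
      linarith [luxNorm_nonneg p (chiS (T \ S))])
    refine hstep.trans ?_
    rw [pow_succ', mul_assoc]
    refine mul_le_mul_of_nonneg_left (ih T hTB hTm ?_) (Real.rpow_nonneg ?_ _)
    · refine le_trans (mul_le_mul_right hTvol _) ?_
      rwa [← mul_assoc, ← pow_succ]
    · rw [sub_nonneg]
      exact Real.rpow_le_one (by positivity) (inv_le_one_of_one_le₀ (by linarith)) hP0.le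

/-- Geometric decay in the number of expansion steps is power decay in the volume ratio. -/
lemma exists_power_decay {K θ : ℝ} (hK : 1 < K) (hθ0 : 0 < θ) (hθ1 : θ < 1) :
    ∃ δ : ℝ, 0 < δ ∧ δ < 1 ∧ ∀ t : ℝ, 0 < t → t ≤ 1 →
      ∃ k : ℕ, K ^ k * t ≤ 1 ∧ θ ^ k ≤ K * t ^ δ := by
  have hlK : 0 < Real.log K := Real.log_pos hK
  have hlθ : Real.log θ < 0 := Real.log_neg hθ0 hθ1
  -- The cap `1 / 2` only serves to keep `δ < 1`; the other term is the sharp value, `K ^ (-δ) = θ`.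
  set δ : ℝ := min (1 / 2) (-Real.log θ / Real.log K) with hδ
  have hδ0 : 0 < δ := lt_min (by norm_num) (div_pos (by linarith) hlK)
  have hδ1 : δ < 1 := (min_le_left _ _).trans_lt (by norm_num)
  have hθK : θ ≤ (K ^ δ)⁻¹ := by
    rw [← Real.log_le_log_iff hθ0 (by positivity), Real.log_inv, Real.log_rpow (by linarith)]
    have := (le_div_iff₀ hlK).1 (min_le_right (1 / 2) (-Real.log θ / Real.log K))
    linarith
  refine ⟨δ, hδ0, hδ1, fun t ht ht1 => ?_⟩
  obtain ⟨k, hk1, hk2⟩ := exists_nat_pow_near ((one_le_inv₀ ht).2 ht1) hK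
  refine ⟨k, by
    have h := mul_le_mul_of_nonneg_right hk1 ht.le
    rwa [inv_mul_cancel₀ ht.ne'] at h, ?_⟩
  calc θ ^ k ≤ ((K ^ δ)⁻¹) ^ k := pow_le_pow_left₀ hθ0.le hθK k
    _ = K ^ δ * ((K ^ (k + 1)) ^ δ)⁻¹ := by
        rw [← Real.rpow_natCast K, ← Real.rpow_mul (by linarith), mul_comm _ δ,
          Real.rpow_mul (by linarith), Real.rpow_natCast, inv_pow, pow_succ]
        field_simp
    _ ≤ K * t ^ δ := by
        refine mul_le_mul ?_ ?_ (by positivity) (by linarith)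
        · exact (Real.rpow_le_rpow_of_exponent_le hK.le hδ1.le).trans_eq (Real.rpow_one _)
        · rw [← Real.inv_rpow (by positivity)]
          refine Real.rpow_le_rpow (by positivity) ?_ hδ0.le
          exact (inv_le_comm₀ (by positivity) ht).2 hk2.le

/-- Lemma 2.3 (first two inequalities): for `p(·) ∈ ℬ(ℝⁿ)` there are `C > 0` and
`δ₁ ∈ (0,1)` such that for all balls `B` and measurable `S ⊆ B`,
`‖χ_B‖/‖χ_S‖ ≤ C |B|/|S|` and `‖χ_S‖/‖χ_B‖ ≤ C (|S|/|B|)^{δ₁}`. -/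
theorem statement2 {n : ℕ} (p : Vn n → ℝ) (hp : IsBExp p) :
    ∃ C : ℝ, 0 < C ∧ ∃ δ₁ : ℝ, 0 < δ₁ ∧ δ₁ < 1 ∧
      ∀ (c : Vn n) (r : ℝ), 0 < r → ∀ S ⊆ Metric.ball c r, MeasurableSet S →
        luxNorm Set.univ p (chiS (Metric.ball c r)) / luxNorm Set.univ p (chiS S) ≤
            C * ((volume (Metric.ball c r)).toReal / (volume S).toReal) ∧
          luxNorm Set.univ p (chiS S) / luxNorm Set.univ p (chiS (Metric.ball c r)) ≤
            C * ((volume S).toReal / (volume (Metric.ball c r)).toReal) ^ δ₁ := by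
  obtain ⟨⟨-, hp1', hess, hbdd⟩, C, hC0, hC⟩ := hp
  have hp1 : ∀ x, 1 ≤ p x := fun x => hp1' x (mem_univ x)
  rw [Measure.restrict_univ] at hess hbdd
  obtain ⟨P', hP'⟩ := hbdd
  rw [eventually_map] at hP'
  set P : ℝ := max 1 P' with hPdef
  have hP0 : 0 < P := lt_max_of_lt_left one_pos
  have hP : ∀ᵐ x, p x ≤ P := hP'.mono fun x hx => hx.trans (le_max_right _ _)
  have hpq : ∀ᵐ x, essInf p volume ≤ p x :=
    ae_essInf_le ⟨1, eventually_map.2 (Eventually.of_forall hp1)⟩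
  set K : ℝ := 5 ^ n * 2 ^ (n + 1) with hK
  have hK1 : 1 < K := by
    have h5 : (1 : ℝ) ≤ 5 ^ n := one_le_pow₀ (by norm_num)
    have h2 : (1 : ℝ) < 2 ^ (n + 1) := one_lt_pow₀ (by norm_num) (by omega)
    nlinarith
  set l : ℝ := (2 * (1 + 2 * C))⁻¹ with hl
  have hl0 : 0 < l := by positivity
  have hlP : l ^ P < 1 :=
    Real.rpow_lt_one hl0.le (inv_lt_one_of_one_lt₀ (by linarith)) hP0
  have hlP0 : 0 < l ^ P := by positivity
  obtain ⟨δ, hδ0, hδ1, hdecay⟩ := exists_power_decay (θ := (1 - l ^ P) ^ P⁻¹) hK1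
    (Real.rpow_pos_of_pos (by linarith) _)
    (Real.rpow_lt_one (by linarith) (by linarith) (by positivity))
  refine ⟨C + K, by linarith, δ, hδ0, hδ1, fun c r hr S hS hSm => ?_⟩
  set b := (volume (ball c r)).toReal with hb
  set s := (volume S).toReal with hs
  have hb0 : 0 < b :=
    ENNReal.toReal_pos (measure_ball_pos volume c hr).ne' measure_ball_lt_top.ne
  have hs0 : 0 ≤ s := ENNReal.toReal_nonneg
  have hsb : s ≤ b := ENNReal.toReal_mono measure_ball_lt_top.ne (measure_mono hS)
  have hSfin : volume S ≠ ∞ := ((measure_mono hS).trans_lt measure_ball_lt_top).ne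
  -- When `S` is null all quotients by `0` are `0`.
  rcases hs0.eq_or_lt with h0 | hspos
  · have hnull : volume S = 0 := by
      rcases (ENNReal.toReal_eq_zero_iff _).1 h0.symm with h | h
      · exact h
      · exact absurd h hSfin
    rw [luxNorm_chiS_null hp1 hSm hnull, _root_.div_zero, _root_.zero_div]
    constructor <;> positivity
  constructor
  · refine div_le_of_le_mul₀ (luxNorm_nonneg _ _) (by positivity) ?_
    have h := luxNorm_le_of_avg hp1 hess hpq hC hSm (measurableSet_ball (x := c) (ε := r)) hr hS
      (ε := s / b) (by positivity) (fun x hx => ⟨c, r, hr, hx, by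
        rw [inter_eq_self_of_subset_right hS, inv_mul_eq_div]⟩)
    rw [div_mul_eq_mul_div, div_le_iff₀ hb0] at h
    have hN := luxNorm_nonneg p (chiS S)
    calc luxNorm univ p (chiS (ball c r)) ≤ C * luxNorm univ p (chiS S) * b / s := by
          rw [le_div_iff₀ hspos, mul_comm]; exact h
      _ = C * (b / s) * luxNorm univ p (chiS S) := by ring
      _ ≤ (C + K) * (b / s) * luxNorm univ p (chiS S) := by gcongr; linarith
  · refine div_le_of_le_mul₀ (luxNorm_nonneg _ _) (by positivity) ?_
    obtain ⟨k, hk1, hk2⟩ := hdecay (s / b) (by positivity) (div_le_one_of_le₀ hsb hb0.le)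
    have hvol : (5 ^ n * 2 ^ (n + 1)) ^ k * volume S ≤ volume (ball c r) := by
      rw [← ENNReal.toReal_le_toReal (ENNReal.mul_ne_top (by finiteness) hSfin)
        measure_ball_lt_top.ne]
      simp only [ENNReal.toReal_mul, ENNReal.toReal_pow, ENNReal.toReal_ofNat]
      rwa [← mul_div_assoc, div_le_one₀ hb0] at hk1
    refine (luxNorm_iterate hp1 hP0 hP hess hpq hC0 hC hr k S hS hSm hvol).trans ?_
    refine mul_le_mul_of_nonneg_right (hk2.trans ?_) (luxNorm_nonneg _ _)
    gcongr
    linarith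

end
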